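/- arXiv:1806.06429 — 2 statements merged into one kernel-verified Lean document; each statement's English description precedes it below -/
import Mathlib

section
/- Let p ∈ [1, 2] and κ ≥ 1. There exists n₀ such that for every n ≥ n₀ there exists s > 0 with: Pr_{G∼G₁}[‖G‖_{1→p} ≤ s] ≥ 1 − 1/n and Pr_{G'∼G₂[κ]}[‖G'‖_{1→p} ≥ κ·s] ≥ 1 − 1/n, where G₁ and G₂[κ] are distributions over n×n matrices. -/
open MeasureTheory ENNReal

/-- The ℓ_p norm of a vector in ℝ^n, for p ∈ [1,∞] (p : ℝ≥0∞),
with `lpNorm ∞ x = max_i |x i|`. -/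
noncomputable def lpNorm (p : ℝ≥0∞) {n : ℕ} (x : Fin n → ℝ) : ℝ :=
  if p = ∞ then ⨆ i, |x i| else (∑ i, |x i| ^ p.toReal) ^ (1 / p.toReal)

/-- The q→p operator norm of a real m×n matrix:
`opNorm q p A = sup_{x} ‖Ax‖_p / ‖x‖_q` (with the convention 0/0 = 0 at x = 0). -/
noncomputable def opNorm (q p : ℝ≥0∞) {m n : ℕ} (A : Matrix (Fin m) (Fin n) ℝ) : ℝ :=
  ⨆ x : Fin n → ℝ, lpNorm p (A.mulVec x) / lpNorm q x

instance matrixMeasurableSpace {m n : Type*} : MeasurableSpace (Matrix m n ℝ) :=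
  MeasurableSpace.pi

/-- A linear map ℝ^{m×n} → ℝ^k, encoded by a k × (m·n) matrix, applied to a matrix A. -/
def sketchApply {k m n : ℕ} (L : Matrix (Fin k) (Fin m × Fin n) ℝ)
    (A : Matrix (Fin m) (Fin n) ℝ) : Fin k → ℝ :=
  L.mulVec fun ij => A ij.1 ij.2

/-- `(S, f)` is a (k, α)-sketching family for the q→p norm of m×n matrices:
S (here μ) is a probability distribution over linear maps L : ℝ^{m×n} → ℝ^k and
f : ℝ^k → ℝ is measurable, such that for every m×n matrix A,
Pr_{L∼μ}[f(L(A)) ∈ (‖A‖_{q→p}/α, α‖A‖_{q→p})] ≥ 5/6. -/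
def IsSketchingFamily (q p : ℝ≥0∞) (m n k : ℕ) (α : ℝ)
    (μ : Measure (Matrix (Fin k) (Fin m × Fin n) ℝ)) (f : (Fin k → ℝ) → ℝ) : Prop :=
  IsProbabilityMeasure μ ∧ Measurable f ∧
  ∀ A : Matrix (Fin m) (Fin n) ℝ,
    (5/6 : ℝ≥0∞) ≤ μ {L | f (sketchApply L A) ∈
      Set.Ioo (opNorm q p A / α) (α * opNorm q p A)}

/-- Total variation distance between two measures: sup over measurable sets E of |μ(E) − ν(E)|. -/
noncomputable def tvDist {Ω : Type*} [MeasurableSpace Ω] (μ ν : Measure Ω) : ℝ :=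
  ⨆ s : {s : Set Ω // MeasurableSet s}, |(μ s.1).toReal - (ν s.1).toReal|

/-- The uniform distribution on Fin n. -/
noncomputable def uniformFin (n : ℕ) : Measure (Fin n) :=
  ((n : ℝ≥0∞))⁻¹ • ∑ i : Fin n, Measure.dirac i

/-- G₁: the distribution of an m×n random matrix with i.i.d. standard Gaussian entries. -/
noncomputable def gaussianMatrix (m n : ℕ) : Measure (Matrix (Fin m) (Fin n) ℝ) :=
  Measure.pi fun _ : Fin m => Measure.pi fun _ : Fin n => ProbabilityTheory.gaussianReal 0 1

/-- The distribution of a standard Gaussian vector in ℝ^m. -/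
noncomputable def gaussianVec (m : ℕ) : Measure (Fin m → ℝ) :=
  Measure.pi fun _ : Fin m => ProbabilityTheory.gaussianReal 0 1

/-- G₂[α]: the distribution of G + α·u·e_iᵀ where G is an i.i.d. standard Gaussian m×n
matrix, u ∈ ℝ^m an independent standard Gaussian vector, and the column index i is
uniform on Fin n, independent of (G, u). -/
noncomputable def spikedGaussian (m n : ℕ) (α : ℝ) : Measure (Matrix (Fin m) (Fin n) ℝ) :=
  Measure.map (fun x : Matrix (Fin m) (Fin n) ℝ × ((Fin m → ℝ) × Fin n) =>
      x.1 + Matrix.of fun a b => if b = x.2.2 then α * x.2.1 a else 0)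
    ((gaussianMatrix m n).prod ((gaussianVec m).prod (uniformFin n)))

open ProbabilityTheory in
/-- Chernoff bound for the sum of i.i.d. copies of a variable with exponential moments. -/
theorem exists_pi_sum_ge_le_pow {Ω : Type*} [MeasurableSpace Ω] (μ : Measure Ω)
    [IsProbabilityMeasure μ] {X : Ω → ℝ} (hX : Measurable X)
    (hexp : (0 : ℝ) ∈ interior (integrableExpSet X μ)) {c : ℝ} (hc : ∫ ω, X ω ∂μ < c) :
    ∃ ρ : ℝ, 0 ≤ ρ ∧ ρ < 1 ∧ ∀ n : ℕ,
      (Measure.pi fun _ : Fin n => μ).real {v | (n : ℝ) * c ≤ ∑ j, X (v j)} ≤ ρ ^ n := by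
  have hd : HasDerivAt (fun t => mgf X μ t * Real.exp (-t * c)) (∫ ω, X ω ∂μ - c) 0 := by
    have h := (hasDerivAt_mgf hexp).mul ((((hasDerivAt_id (0 : ℝ)).neg).mul_const c).exp)
    convert! h using 1
    simp [sub_eq_add_neg]
  have hlt : ∀ᶠ t in nhdsWithin (0 : ℝ) (Set.Ioi 0), mgf X μ t * Real.exp (-t * c) < 1 := by
    have hs := (hasDerivWithinAt_iff_tendsto_slope' (s := Set.Ioi (0 : ℝ)) (by simp)).1
      hd.hasDerivWithinAt
    filter_upwards [hs.eventually_lt_const (sub_neg.2 hc), self_mem_nhdsWithin] with t ht htpos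
    have htpos : 0 < t := htpos
    rw [slope_def_field, sub_zero, div_neg_iff] at ht
    rcases ht with ht | ht
    · linarith [ht.2]
    · simpa using ht.1
  have hint : ∀ᶠ t in nhdsWithin (0 : ℝ) (Set.Ioi 0), t ∈ integrableExpSet X μ :=
    nhdsWithin_le_nhds (mem_interior_iff_mem_nhds.1 hexp)
  obtain ⟨t, ⟨ht1, ht2⟩, htpos⟩ := ((hlt.and hint).and self_mem_nhdsWithin).exists
  have htpos : 0 < t := htpos
  refine ⟨mgf X μ t * Real.exp (-t * c), mul_nonneg mgf_nonneg (Real.exp_nonneg _), ht1,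
    fun n => ?_⟩
  set P := Measure.pi fun _ : Fin n => μ
  let Y : Fin n → (Fin n → Ω) → ℝ := fun j v => X (v j)
  have hYm : ∀ j, Measurable (Y j) := fun j => hX.comp (measurable_pi_apply j)
  have hind : iIndepFun Y P := iIndepFun_pi (X := fun _ => X) fun _ => hX.aemeasurable
  have hmp : ∀ j, MeasurePreserving (Function.eval j) P μ := fun j =>
    measurePreserving_eval (fun _ : Fin n => μ) j
  have hYint : ∀ j, Integrable (fun v => Real.exp (t * Y j v)) P := fun j =>
    ((hmp j).integrable_comp_of_integrable ht2)
  have hYmgf : ∀ j, mgf (Y j) P t = mgf X μ t := by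
    intro j
    have := mgf_map (μ := P) (Y := Function.eval j) (X := X) (t := t)
      (hmp j).measurable.aemeasurable (by rw [(hmp j).map_eq]; fun_prop)
    rw [(hmp j).map_eq] at this
    exact this.symm
  have hb := measure_ge_le_exp_mul_mgf (μ := P) (X := ∑ j, Y j) ((n : ℝ) * c) htpos.le
    (hind.integrable_exp_mul_sum hYm fun j _ => hYint j)
  rw [hind.mgf_sum hYm, Finset.prod_congr rfl fun j _ => hYmgf j] at hb
  simp only [Finset.sum_apply, Y, Finset.prod_const, Finset.card_univ, Fintype.card_fin] at hb
  refine hb.trans (le_of_eq ?_)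
  rw [mul_pow, ← Real.exp_nat_mul, mul_comm]
  ring_nf

open ProbabilityTheory in
theorem zero_mem_interior_integrableExpSet_abs_rpow {r : ℝ} (hr0 : 0 ≤ r) (hr2 : r ≤ 2) :
    (0 : ℝ) ∈ interior (integrableExpSet (fun x : ℝ => |x| ^ r) (gaussianReal 0 1)) := by
  obtain ⟨C, hC, hint⟩ := IsGaussian.exists_integrable_exp_sq (gaussianReal 0 1)
  refine mem_interior.2 ⟨Set.Ioo (-C) C, fun t ht => ?_, isOpen_Ioo, by simpa⟩
  have hm : Measurable fun x : ℝ => |x| ^ r := by fun_prop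
  refine (hint.const_mul (Real.exp C)).mono' (by fun_prop) (.of_forall fun x => ?_)
  rw [Real.norm_eq_abs, Real.abs_exp, ← Real.exp_add, Real.exp_le_exp]
  have hx : |x| ^ r ≤ 1 + ‖x‖ ^ 2 := by
    rw [Real.norm_eq_abs]
    rcases le_total |x| 1 with h | h
    · exact (Real.rpow_le_one (abs_nonneg x) h hr0).trans (by nlinarith [sq_nonneg |x|])
    · have := Real.rpow_le_rpow_of_exponent_le h hr2
      rw [Real.rpow_two] at this
      linarith
  have h0 : 0 ≤ |x| ^ r := by positivity
  nlinarith [ht.2]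

open ProbabilityTheory in
theorem zero_mem_interior_integrableExpSet_neg {Ω : Type*} [MeasurableSpace Ω] {μ : Measure Ω}
    {X : Ω → ℝ} (h : (0 : ℝ) ∈ interior (integrableExpSet X μ)) :
    (0 : ℝ) ∈ interior (integrableExpSet (fun ω => -X ω) μ) := by
  rw [mem_interior_iff_mem_nhds] at h ⊢
  have ht : Filter.Tendsto (fun t : ℝ => -t) (nhds 0) (nhds 0) := by
    simpa using (continuous_neg (G := ℝ)).tendsto 0
  filter_upwards [ht h] with t ht'
  simpa [integrableExpSet] using ht'

open ProbabilityTheory in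
theorem integral_abs_rpow_gaussianReal_pos {r : ℝ} (hr0 : 0 ≤ r) (hr2 : r ≤ 2) :
    0 < ∫ x, |x| ^ r ∂(gaussianReal 0 1) := by
  rw [integral_pos_iff_support_of_nonneg (fun x => by positivity)
    (by simpa using (integrable_pow_of_mem_interior_integrableExpSet
      (zero_mem_interior_integrableExpSet_abs_rpow hr0 hr2) 1))]
  have : ({0}ᶜ : Set ℝ) ⊆ Function.support fun x : ℝ => |x| ^ r := fun x hx =>
    (Real.rpow_pos_of_pos (abs_pos.2 hx) r).ne'
  refine lt_of_lt_of_le ?_ (measure_mono this)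
  have := nullSingletonClass_gaussianReal (μ := 0) (v := 1) one_ne_zero
  rw [prob_compl_eq_one_sub (measurableSet_singleton 0), measure_singleton]
  simp

theorem lpNorm_eq_norm_toLp {p : ℝ≥0∞} (hp1 : 1 ≤ p) (hp : p ≠ ∞) {n : ℕ} (x : Fin n → ℝ) :
    lpNorm p x = ‖WithLp.toLp p x‖ := by
  rw [_root_.lpNorm, if_neg hp, PiLp.norm_eq_sum (ENNReal.toReal_pos (by positivity) hp)]
  rfl

theorem lpNorm_mulVec_div_le {p : ℝ≥0∞} (hp1 : 1 ≤ p) (hp : p ≠ ∞) {m n : ℕ}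
    (A : Matrix (Fin m) (Fin n) ℝ) {s : ℝ} (hs : 0 ≤ s)
    (hA : ∀ i, lpNorm p (A.col i) ≤ s) (x : Fin n → ℝ) :
    lpNorm p (A.mulVec x) / lpNorm 1 x ≤ s := by
  have := Fact.mk hp1
  have hx1 : lpNorm 1 x = ∑ i, |x i| := by simp [_root_.lpNorm]
  refine div_le_of_le_mul₀ (by rw [hx1]; positivity) hs ?_
  rw [hx1, Finset.mul_sum, lpNorm_eq_norm_toLp hp1 hp, Matrix.mulVec_eq_sum, WithLp.toLp_sum]
  refine (norm_sum_le _ _).trans (Finset.sum_le_sum fun i _ => ?_)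
  have hi := hA i
  rw [lpNorm_eq_norm_toLp hp1 hp] at hi
  rw [mul_comm]
  calc _ = ‖x i • WithLp.toLp p (A.col i)‖ := by
        congr 1
        ext j
        simp [mul_comm]
    _ = |x i| * ‖WithLp.toLp p (A.col i)‖ := by rw [norm_smul, Real.norm_eq_abs]
    _ ≤ _ := by gcongr

theorem opNorm_one_le {p : ℝ≥0∞} (hp1 : 1 ≤ p) (hp : p ≠ ∞) {m n : ℕ}
    (A : Matrix (Fin m) (Fin n) ℝ) {s : ℝ} (hs : 0 ≤ s)
    (hA : ∀ i, lpNorm p (A.col i) ≤ s) : opNorm 1 p A ≤ s :=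
  ciSup_le (lpNorm_mulVec_div_le hp1 hp A hs hA)

theorem lpNorm_col_le_opNorm_one {p : ℝ≥0∞} (hp1 : 1 ≤ p) (hp : p ≠ ∞) {m n : ℕ}
    (A : Matrix (Fin m) (Fin n) ℝ) (i : Fin n) : lpNorm p (A.col i) ≤ opNorm 1 p A := by
  have := Fact.mk hp1
  have h0 : ∀ k, 0 ≤ lpNorm p (A.col k) := fun k => by
    rw [lpNorm_eq_norm_toLp hp1 hp]; positivity
  have hb : BddAbove (Set.range fun x : Fin n → ℝ => lpNorm p (A.mulVec x) / lpNorm 1 x) := by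
    refine ⟨∑ k, lpNorm p (A.col k), ?_⟩
    rintro _ ⟨x, rfl⟩
    exact lpNorm_mulVec_div_le hp1 hp A (Finset.sum_nonneg fun k _ => h0 k)
      (fun k => Finset.single_le_sum (f := fun k => lpNorm p (A.col k)) (fun k _ => h0 k)
        (Finset.mem_univ k)) x
  have h := le_ciSup hb (Pi.single i 1)
  have h1 : lpNorm 1 (Pi.single i (1 : ℝ) : Fin n → ℝ) = 1 := by
    simp [_root_.lpNorm, Pi.single_apply, apply_ite abs]
  simp only [h1, Matrix.mulVec_single_one, div_one] at h
  exact h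

instance isProbabilityMeasure_gaussianVec (m : ℕ) : IsProbabilityMeasure (gaussianVec m) := by
  unfold gaussianVec; infer_instance

instance isProbabilityMeasure_gaussianMatrix (m n : ℕ) :
    IsProbabilityMeasure (gaussianMatrix m n) := by
  unfold gaussianMatrix
  exact Measure.pi.instIsProbabilityMeasure
    (fun _ : Fin m => Measure.pi fun _ : Fin n => ProbabilityTheory.gaussianReal 0 1)

theorem isProbabilityMeasure_uniformFin {n : ℕ} (hn : n ≠ 0) :
    IsProbabilityMeasure (uniformFin n) := by
  refine ⟨?_⟩
  simp [uniformFin]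
  exact ENNReal.inv_mul_cancel (by simpa) (by simp)

theorem measurePreserving_col (m n : ℕ) (i : Fin n) :
    MeasurePreserving (fun G : Matrix (Fin m) (Fin n) ℝ => G.col i)
      (gaussianMatrix m n) (gaussianVec m) :=
  measurePreserving_pi (fun _ => Measure.pi fun _ => ProbabilityTheory.gaussianReal 0 1)
    (fun _ => ProbabilityTheory.gaussianReal 0 1) (f := fun _ => Function.eval i)
    fun _ => measurePreserving_eval (fun _ => ProbabilityTheory.gaussianReal 0 1) i

open ProbabilityTheory in
theorem map_add_const_mul_gaussianReal_prod (κ : ℝ) :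
    ((gaussianReal 0 1).prod (gaussianReal 0 1)).map (fun z : ℝ × ℝ => z.1 + κ * z.2) =
      (gaussianReal 0 1).map (fun x => √(1 + κ ^ 2) * x) := by
  have h1 : (fun z : ℝ × ℝ => z.1 + κ * z.2) =
      (fun z : ℝ × ℝ => z.1 + z.2) ∘ Prod.map id (fun y => κ * y) := rfl
  rw [h1, ← Measure.map_map (by fun_prop) (by fun_prop),
    ← Measure.map_prod_map _ _ measurable_id (by fun_prop), Measure.map_id,
    gaussianReal_map_const_mul, gaussianReal_map_const_mul]
  change Measure.conv _ _ = _
  rw [gaussianReal_conv_gaussianReal]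
  congr 1
  · simp
  · ext
    simp [Real.sq_sqrt (by positivity : (0 : ℝ) ≤ 1 + κ ^ 2)]

/-- The perturbed column has the law of a standard Gaussian vector scaled by `√(1 + κ²)`. -/
theorem measurePreserving_spiked_col {n : ℕ} (m : ℕ) (hn : n ≠ 0) (κ : ℝ) (i : Fin n) :
    MeasurePreserving
      (fun x : Matrix (Fin m) (Fin n) ℝ × ((Fin m → ℝ) × Fin n) =>
        fun j => x.1 j i + κ * x.2.1 j)
      ((gaussianMatrix m n).prod ((gaussianVec m).prod (uniformFin n)))
      ((gaussianVec m).map fun v j => √(1 + κ ^ 2) * v j) := by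
  have := isProbabilityMeasure_uniformFin hn
  have : IsProbabilityMeasure ((ProbabilityTheory.gaussianReal 0 1).map
      (fun x => √(1 + κ ^ 2) * x)) := Measure.isProbabilityMeasure_map (by fun_prop)
  have h1 := (measurePreserving_col m n i).prod
    (measurePreserving_fst (μ := gaussianVec m) (ν := uniformFin n))
  have h2 := (measurePreserving_arrowProdEquivProdArrow ℝ ℝ (Fin m)
    (fun _ => ProbabilityTheory.gaussianReal 0 1)
    (fun _ => ProbabilityTheory.gaussianReal 0 1)).symm
  have h3 := measurePreserving_pi
    (fun _ : Fin m => (ProbabilityTheory.gaussianReal 0 1).prod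
      (ProbabilityTheory.gaussianReal 0 1))
    (fun _ => (ProbabilityTheory.gaussianReal 0 1).map (fun x => √(1 + κ ^ 2) * x))
    (f := fun _ z => z.1 + κ * z.2)
    fun _ => ⟨by fun_prop, map_add_const_mul_gaussianReal_prod κ⟩
  have h4 := h3.comp (h2.comp h1)
  have h5 : (gaussianVec m).map (fun v j => √(1 + κ ^ 2) * v j) =
      Measure.pi fun _ => (ProbabilityTheory.gaussianReal 0 1).map
        (fun x => √(1 + κ ^ 2) * x) :=
    Measure.pi_map_pi fun _ => by fun_prop
  rw [h5]
  exact h4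

theorem ofReal_one_sub_le_of_compl_le {Ω : Type*} [MeasurableSpace Ω] (μ : Measure Ω)
    [IsProbabilityMeasure μ] {A : Set Ω} {ε : ℝ} (hε : 0 ≤ ε) (h : μ Aᶜ ≤ ENNReal.ofReal ε) :
    ENNReal.ofReal (1 - ε) ≤ μ A := by
  rw [ENNReal.ofReal_sub _ hε, ENNReal.ofReal_one, tsub_le_iff_right]
  calc (1 : ℝ≥0∞) = μ (A ∪ Aᶜ) := by simp
    _ ≤ μ A + μ Aᶜ := measure_union_le _ _
    _ ≤ _ := by gcongr

/-- A union bound over `n` events, each a measure-preserving preimage of a set `B`. -/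
theorem measure_iUnion_preimage_le {Ω Ω' : Type*} [MeasurableSpace Ω] [MeasurableSpace Ω']
    {μ : Measure Ω} {ν : Measure Ω'} [IsFiniteMeasure ν] {n : ℕ} (hn : n ≠ 0)
    {f : Fin n → Ω → Ω'} (hf : ∀ i, MeasurePreserving (f i) μ ν) {B : Set Ω'}
    (hB : MeasurableSet B) {ε : ℝ} (h : (n : ℝ) ^ 2 * ε ≤ 1) (hν : ν.real B ≤ ε) :
    μ (⋃ i, f i ⁻¹' B) ≤ ENNReal.ofReal (1 / n) := by
  have hn' : (0 : ℝ) < n := by positivity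
  refine (measure_iUnion_fintype_le _ _).trans ?_
  simp_rw [fun i => (hf i).measure_preimage hB.nullMeasurableSet]
  rw [Finset.sum_const, Finset.card_univ, Fintype.card_fin, ← ofReal_measureReal (μ := ν),
    ← ENNReal.ofReal_nsmul]
  refine ENNReal.ofReal_le_ofReal ?_
  rw [nsmul_eq_mul, le_div_iff₀ hn']
  nlinarith

/-- Separation for the 1→p norm, p ∈ [1,2]: for κ ≥ 1 there is n₀ such that for all
n ≥ n₀ there is s > 0 with Pr_{G∼G₁}[‖G‖_{1→p} ≤ s] ≥ 1 − 1/n and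
Pr_{G'∼G₂[κ]}[‖G'‖_{1→p} ≥ κ·s] ≥ 1 − 1/n, for n×n matrices. -/
theorem one_to_p_separation (p : ℝ≥0∞) (hp1 : 1 ≤ p) (hp2 : p ≤ 2) (κ : ℝ) (hκ : 1 ≤ κ) :
    ∃ n₀ : ℕ, ∀ n : ℕ, n₀ ≤ n →
      ∃ s : ℝ, 0 < s ∧
        ENNReal.ofReal (1 - 1 / n) ≤ gaussianMatrix n n {G | opNorm 1 p G ≤ s} ∧
        ENNReal.ofReal (1 - 1 / n) ≤ spikedGaussian n n κ {G | κ * s ≤ opNorm 1 p G} := by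
  have hp : p ≠ ∞ := (hp2.trans_lt (by simp)).ne
  set r := p.toReal with hr
  have hr1 : 1 ≤ r := by simpa using ENNReal.toReal_mono hp hp1
  have hr2 : r ≤ 2 := by simpa using ENNReal.toReal_mono (by simp) hp2
  have hr0 : 0 < r := by linarith
  have hlp : ∀ {n : ℕ} (v : Fin n → ℝ), lpNorm p v = (∑ i, |v i| ^ r) ^ (1 / r) := fun v => by
    rw [_root_.lpNorm, if_neg hp]
  set μ := ProbabilityTheory.gaussianReal 0 1
  have hm := integral_abs_rpow_gaussianReal_pos hr0.le hr2
  set M := ∫ x, |x| ^ r ∂μ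
  have hexp := zero_mem_interior_integrableExpSet_abs_rpow hr0.le hr2
  set σ := √(1 + κ ^ 2)
  have hκ0 : 0 < κ := by linarith
  have hσ : κ < σ := Real.lt_sqrt_of_sq_lt (by linarith)
  have hσ0 : 0 < σ := hκ0.trans hσ
  have hpow : κ ^ r < σ ^ r := Real.rpow_lt_rpow hκ0.le hσ hr0
  have hκr : 0 < κ ^ r := by positivity
  have hσr : 0 < σ ^ r := by positivity
  -- thresholds `c₂ < M < c₁` for the empirical `r`-th moment with `κ ^ r * c₁ = σ ^ r * c₂`
  set c₁ := 2 * σ ^ r * M / (κ ^ r + σ ^ r) with hc₁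
  set c₂ := 2 * κ ^ r * M / (κ ^ r + σ ^ r) with hc₂
  have hMc₁ : M < c₁ := by rw [hc₁, lt_div_iff₀ (by positivity)]; nlinarith
  have hMc₂ : c₂ < M := by rw [hc₂, div_lt_iff₀ (by positivity)]; nlinarith
  have hcc : κ ^ r * c₁ = σ ^ r * c₂ := by rw [hc₁, hc₂]; ring
  have hc₁0 : 0 < c₁ := hm.trans hMc₁
  obtain ⟨ρ₁, hρ₁0, hρ₁, hup⟩ := exists_pi_sum_ge_le_pow μ (by fun_prop) hexp hMc₁
  obtain ⟨ρ₂, hρ₂0, hρ₂, hlow⟩ := exists_pi_sum_ge_le_pow μ (X := fun x : ℝ => -|x| ^ r)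
    (c := -c₂) (by fun_prop)
    (zero_mem_interior_integrableExpSet_neg hexp) (by rw [integral_neg]; linarith)
  have hev : ∀ ρ : ℝ, 0 ≤ ρ → ρ < 1 → ∀ᶠ n : ℕ in Filter.atTop, (n : ℝ) ^ 2 * ρ ^ n ≤ 1 :=
    fun ρ h0 h1 => (tendsto_pow_const_mul_const_pow_of_abs_lt_one 2
      (by rwa [abs_of_nonneg h0])).eventually_le_const zero_lt_one
  obtain ⟨n₀, hn₀⟩ := Filter.eventually_atTop.1
    (((hev ρ₁ hρ₁0 hρ₁).and (hev ρ₂ hρ₂0 hρ₂)).and (Filter.eventually_ne_atTop 0))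
  refine ⟨n₀, fun n hn => ?_⟩
  obtain ⟨⟨hn1, hn2⟩, hn0⟩ := hn₀ n hn
  have hnpos : (0 : ℝ) < n := by positivity
  refine ⟨(n * c₁) ^ (1 / r), by positivity, ?_, ?_⟩
  · refine ofReal_one_sub_le_of_compl_le _ (by positivity) (le_trans (measure_mono ?_)
      (measure_iUnion_preimage_le hn0 (measurePreserving_col n n)
        (measurableSet_le measurable_const (by fun_prop)) hn1 (hup n)))
    intro G hG
    by_contra hcon
    simp only [Set.mem_iUnion, Set.mem_preimage, Set.mem_ofPred_eq, not_exists, not_le] at hcon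
    refine hG (opNorm_one_le hp1 hp G (by positivity) fun i => ?_)
    rw [hlp]
    exact Real.rpow_le_rpow (by positivity) (hcon i).le (by positivity)
  · have := isProbabilityMeasure_uniformFin hn0
    have hB : MeasurableSet {v : Fin n → ℝ | ∑ j, |v j| ^ r ≤ n * (κ ^ r * c₁)} :=
      measurableSet_le (by fun_prop) measurable_const
    have hscale : Measurable fun (v : Fin n → ℝ) j => σ * v j := by fun_prop
    have hlaw : ((gaussianVec n).map fun v j => σ * v j).real
        {v : Fin n → ℝ | ∑ j, |v j| ^ r ≤ n * (κ ^ r * c₁)} ≤ ρ₂ ^ n := by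
      rw [map_measureReal_apply hscale hB]
      refine le_trans (le_of_eq ?_) (hlow n)
      change (gaussianVec n).real _ = (gaussianVec n).real _
      congr 1
      ext v
      simp only [Set.mem_preimage, Set.mem_ofPred_eq, abs_mul, abs_of_pos hσ0,
        Real.mul_rpow hσ0.le (abs_nonneg _), ← Finset.mul_sum, hcc, Finset.sum_neg_distrib,
        mul_neg, neg_le_neg_iff]
      rw [mul_left_comm, mul_le_mul_iff_right₀ hσr]
    have hfm : Measurable (fun x : Matrix (Fin n) (Fin n) ℝ × ((Fin n → ℝ) × Fin n) =>
        x.1 + Matrix.of fun a b => if b = x.2.2 then κ * x.2.1 a else 0) := by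
      refine measurable_pi_lambda _ fun a => measurable_pi_lambda _ fun b => ?_
      simp only [Matrix.add_apply, Matrix.of_apply]
      refine Measurable.add ?_ (Measurable.ite ?_ ?_ measurable_const)
      · exact (measurable_pi_apply b).comp ((measurable_pi_apply a).comp measurable_fst)
      · exact measurableSet_eq_fun measurable_const (by fun_prop)
      · fun_prop
    refine le_trans ?_ (Measure.le_map_apply hfm.aemeasurable _)
    have := Measure.isProbabilityMeasure_map (μ := gaussianVec n) hscale.aemeasurable
    refine ofReal_one_sub_le_of_compl_le _ (by positivity) (le_trans (measure_mono ?_)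
      (measure_iUnion_preimage_le hn0 (measurePreserving_spiked_col n hn0 κ) hB hn2 hlaw))
    intro x hx
    by_contra hcon
    simp only [Set.mem_iUnion, Set.mem_preimage, Set.mem_ofPred_eq, not_exists, not_le] at hcon
    refine hx (le_trans ?_ (lpNorm_col_le_opNorm_one hp1 hp _ x.2.2))
    have hκs : κ * (n * c₁) ^ (1 / r) = (n * (κ ^ r * c₁)) ^ (1 / r) := by
      rw [mul_left_comm, Real.mul_rpow hκr.le (by positivity), ← Real.rpow_mul hκ0.le,
        mul_one_div_cancel hr0.ne', Real.rpow_one]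
    rw [hlp, hκs]
    refine Real.rpow_le_rpow (by positivity) ?_ (by positivity)
    simpa [Matrix.col] using (hcon x.2.2).le
end

section
/- There exists an absolute constant C' > 0 such that for all positive integers n, k, every t > 0, and every linear map L : ℝ^{n×n} → ℝ^k, the total variation distance between the pushforward L#G₁ and the pushforward L#D₂[t] is at most C'·t·√k/n, where D₂[t] is the uniform mixture over pairs (i,j) ∈ [n]×[n] of the law of G + t·e_i e_jᵀ with G ∼ G₁. -/
open MeasureTheory ENNReal

/-- D₂[t]: the distribution of G + t·e_i·e_jᵀ where G is an i.i.d. standard Gaussian n×n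
matrix, and the entry index (i,j) is uniform on [n]×[n], independent of G. -/
noncomputable def entrySpiked (n : ℕ) (t : ℝ) : Measure (Matrix (Fin n) (Fin n) ℝ) :=
  Measure.map (fun x : Matrix (Fin n) (Fin n) ℝ × (Fin n × Fin n) =>
      x.1 + Matrix.of fun a b => if a = x.2.1 ∧ b = x.2.2 then t else 0)
    ((gaussianMatrix n n).prod ((uniformFin n).prod (uniformFin n)))

open ProbabilityTheory

/-- `ν` has density `f` with respect to `μ`, where `f` is square-integrable with `∫ f² = c`. -/
structure HasSqIntegrableDensity {α : Type*} [MeasurableSpace α] (ν μ : Measure α)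
    (f : α → ℝ) (c : ℝ) : Prop where
  measurable : Measurable f
  nonneg : ∀ x, 0 ≤ f x
  integrable_sq : Integrable (fun x => f x ^ 2) μ
  integral_sq : ∫ x, f x ^ 2 ∂μ = c
  eq_withDensity : ν = μ.withDensity fun x => ENNReal.ofReal (f x)

namespace HasSqIntegrableDensity

lemma integrable {α : Type*} [MeasurableSpace α] {ν μ : Measure α} [IsProbabilityMeasure μ]
    {f : α → ℝ} {c : ℝ} (h : HasSqIntegrableDensity ν μ f c) : Integrable f μ :=
  ((memLp_two_iff_integrable_sq h.measurable.aestronglyMeasurable).2 h.integrable_sq).integrable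
    (by norm_num)

lemma measureReal_eq {α : Type*} [MeasurableSpace α] {ν μ : Measure α} [IsProbabilityMeasure μ]
    {f : α → ℝ} {c : ℝ} (h : HasSqIntegrableDensity ν μ f c) {s : Set α} (hs : MeasurableSet s) :
    ν.real s = ∫ x in s, f x ∂μ := by
  rw [h.eq_withDensity, measureReal_def, withDensity_apply _ hs,
    integral_eq_lintegral_of_nonneg_ae (ae_of_all _ h.nonneg)
      h.measurable.aestronglyMeasurable]

lemma pi {ι : Type*} [Fintype ι] {α : ι → Type*} [∀ i, MeasurableSpace (α i)]
    {ν μ : ∀ i, Measure (α i)} [∀ i, IsProbabilityMeasure (ν i)] [∀ i, IsProbabilityMeasure (μ i)]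
    {f : ∀ i, α i → ℝ} {c : ι → ℝ} (h : ∀ i, HasSqIntegrableDensity (ν i) (μ i) (f i) (c i)) :
    HasSqIntegrableDensity (Measure.pi ν) (Measure.pi μ) (fun x => ∏ i, f i (x i)) (∏ i, c i) where
  measurable := Finset.measurable_prod _ fun i _ => (h i).measurable.comp (measurable_pi_apply i)
  nonneg x := Finset.prod_nonneg fun i _ => (h i).nonneg _
  integrable_sq := by
    simp_rw [← Finset.prod_pow]
    exact Integrable.fintype_prod_dep fun i => (h i).integrable_sq
  integral_sq := by
    simp_rw [← Finset.prod_pow]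
    rw [integral_fintype_prod_eq_prod fun i x => f i x ^ 2]
    exact Finset.prod_congr rfl fun i _ => (h i).integral_sq
  eq_withDensity := by
    refine Measure.pi_eq fun s hs => ?_
    rw [withDensity_apply _ (MeasurableSet.univ_pi hs), Measure.restrict_pi_pi,
      ← ofReal_integral_eq_lintegral_ofReal
        (Integrable.fintype_prod_dep fun i => (h i).integrable.restrict)
        (ae_of_all _ fun x => Finset.prod_nonneg fun i _ => (h i).nonneg _),
      integral_fintype_prod_eq_prod, ENNReal.ofReal_prod_of_nonneg
        fun i _ => integral_nonneg (h i).nonneg]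
    refine Finset.prod_congr rfl fun i _ => ?_
    rw [← (h i).measureReal_eq (hs i), ofReal_measureReal]

lemma abs_measureReal_sub_le {α : Type*} [MeasurableSpace α] {ν μ : Measure α}
    [IsProbabilityMeasure ν] [IsProbabilityMeasure μ] {f : α → ℝ} {c : ℝ}
    (h : HasSqIntegrableDensity ν μ f c) {s : Set α} (hs : MeasurableSet s) :
    |μ.real s - ν.real s| ≤ √(c - 1) := by
  have hf := h.integrable
  have hf1 : ∫ x, f x ∂μ = 1 := by
    rw [← setIntegral_univ, ← h.measureReal_eq MeasurableSet.univ]; simp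
  have hg : Integrable (fun x => |f x - 1|) μ := (hf.sub (integrable_const 1)).abs
  have hsq : (fun x => |f x - 1| ^ 2) = fun x => f x ^ 2 - 2 * f x + 1 := by
    ext x; rw [sq_abs]; ring
  have hint : Integrable (fun x => f x ^ 2 - 2 * f x) μ := h.integrable_sq.sub (hf.const_mul 2)
  have hI : ∫ x, |f x - 1| ^ 2 ∂μ = c - 1 := by
    rw [hsq, integral_add hint (integrable_const 1),
      integral_sub h.integrable_sq (hf.const_mul 2), integral_const_mul, h.integral_sq, hf1]
    simp; ring
  have hmem : MemLp (fun x => |f x - 1|) 2 μ := by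
    rw [memLp_two_iff_integrable_sq hg.aestronglyMeasurable, hsq]
    exact hint.add (integrable_const 1)
  have hvar : (∫ x, |f x - 1| ∂μ) ^ 2 ≤ c - 1 := by
    have h0 := variance_nonneg (fun x => |f x - 1|) μ
    rw [variance_eq_sub hmem] at h0
    simp only [Pi.pow_apply] at h0
    linarith
  calc |μ.real s - ν.real s| = |∫ x in s, (f x - 1) ∂μ| := by
        rw [h.measureReal_eq hs, integral_sub hf.restrict (integrable_const 1), abs_sub_comm]
        simp
    _ ≤ ∫ x in s, |f x - 1| ∂μ := abs_integral_le_integral_abs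
    _ ≤ ∫ x, |f x - 1| ∂μ :=
        setIntegral_le_integral hg (ae_of_all _ fun x => abs_nonneg _)
    _ ≤ √(c - 1) := Real.le_sqrt_of_sq_le hvar

end HasSqIntegrableDensity

lemma hasSqIntegrableDensity_gaussianReal (v : ℝ) :
    HasSqIntegrableDensity (gaussianReal v 1) (gaussianReal 0 1)
      (fun x => Real.exp (v * x - v ^ 2 / 2)) (Real.exp (v ^ 2)) := by
  have hsq (x : ℝ) : Real.exp (v * x - v ^ 2 / 2) ^ 2
      = Real.exp (-v ^ 2) * Real.exp ((2 * v) * x) := by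
    rw [← Real.exp_nat_mul, ← Real.exp_add]; congr 1; push_cast; ring
  refine ⟨by fun_prop, fun x => (Real.exp_pos _).le, ?_, ?_, ?_⟩
  · simp_rw [hsq]
    exact (integrable_exp_mul_gaussianReal (2 * v)).const_mul _
  · simp_rw [hsq]
    have := congrFun (mgf_id_gaussianReal (μ := 0) (v := 1)) (2 * v)
    simp only [mgf, id] at this
    rw [integral_const_mul, this, ← Real.exp_add]
    congr 1; push_cast; ring
  · rw [gaussianReal_of_var_ne_zero _ one_ne_zero, gaussianReal_of_var_ne_zero _ one_ne_zero,
      ← withDensity_mul _ (measurable_gaussianPDF _ _) (by fun_prop)]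
    congr 1
    ext x
    simp only [Pi.mul_apply, gaussianPDF, gaussianPDFReal]
    rw [← ENNReal.ofReal_mul (by positivity), mul_assoc (√_)⁻¹, ← Real.exp_add]
    congr 3; push_cast; ring

instance (m n : ℕ) : IsProbabilityMeasure (gaussianMatrix m n) := by
  have (_ : Fin m) : IsProbabilityMeasure (Measure.pi fun _ : Fin n => gaussianReal 0 1) :=
    inferInstance
  exact Measure.pi.instIsProbabilityMeasure _

lemma measurable_add_const_matrix {m n : ℕ} (V : Matrix (Fin m) (Fin n) ℝ) :
    Measurable (· + V) := by
  refine measurable_pi_lambda _ fun a => measurable_pi_lambda _ fun b => ?_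
  have hab : Measurable fun x : Fin m → Fin n → ℝ => x a b := by fun_prop
  exact hab.add_const (V a b)

lemma gaussianMatrix_map_add_const (m n : ℕ) (V : Matrix (Fin m) (Fin n) ℝ) :
    (gaussianMatrix m n).map (· + V)
      = Measure.pi fun i => Measure.pi fun j => gaussianReal (V i j) 1 := by
  have h1 (i : Fin m) : (Measure.pi fun _ : Fin n => gaussianReal 0 1).map
      (fun x j => x j + V i j) = Measure.pi fun j => gaussianReal (V i j) 1 := by
    rw [Measure.pi_map_pi (f := fun j x => x + V i j) fun j => by fun_prop]
    simp [gaussianReal_map_add_const]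
  simp_rw [← h1]
  have (i : Fin m) : IsProbabilityMeasure ((Measure.pi fun _ : Fin n => gaussianReal 0 1).map
      (fun x j => x j + V i j)) := by rw [h1]; infer_instance
  exact Measure.pi_map_pi (f := fun i (x : Fin n → ℝ) j => x j + V i j)
    fun i => (measurable_pi_lambda _ fun j =>
      (measurable_pi_apply j).add_const (V i j)).aemeasurable

/-- Translating a Gaussian matrix by `V` moves it by at most `√2 ‖V‖_F` in total variation. -/
lemma abs_gaussianMatrix_sub_map_add_le {m n : ℕ} (V : Matrix (Fin m) (Fin n) ℝ)
    {s : Set (Matrix (Fin m) (Fin n) ℝ)} (hs : MeasurableSet s) :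
    |(gaussianMatrix m n).real s - ((gaussianMatrix m n).map (· + V)).real s|
      ≤ √(2 * ∑ i, ∑ j, V i j ^ 2) := by
  have := Measure.isProbabilityMeasure_map (μ := gaussianMatrix m n)
    (measurable_add_const_matrix V).aemeasurable
  have hone : |(gaussianMatrix m n).real s - ((gaussianMatrix m n).map (· + V)).real s| ≤ 1 :=
    abs_sub_le_of_nonneg_of_le measureReal_nonneg measureReal_le_one measureReal_nonneg
      measureReal_le_one
  rw [gaussianMatrix_map_add_const] at hone ⊢
  have hν (i : Fin m) : IsProbabilityMeasure (Measure.pi fun j => gaussianReal (V i j) 1) :=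
    inferInstance
  have hμ (_ : Fin m) : IsProbabilityMeasure (Measure.pi fun _ : Fin n => gaussianReal 0 1) :=
    inferInstance
  have h := (HasSqIntegrableDensity.pi fun i => HasSqIntegrableDensity.pi fun j =>
    hasSqIntegrableDensity_gaussianReal (V i j)).abs_measureReal_sub_le hs
  change |(gaussianMatrix m n).real s - _| ≤ _ at h
  simp_rw [← Real.exp_sum] at h
  set S := ∑ i, ∑ j, V i j ^ 2
  have hS0 : 0 ≤ S := by positivity
  rcases le_total S 1 with h1 | h1
  · refine h.trans (Real.sqrt_le_sqrt ?_)
    have := Real.abs_exp_sub_one_le (x := S) (by rwa [abs_of_nonneg hS0])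
    rw [abs_of_nonneg hS0] at this
    exact (le_abs_self _).trans this
  · exact hone.trans (Real.one_le_sqrt.2 (by linarith : 1 ≤ 2 * S))

/-- Modulo the kernel of a rank `≤ k` map, the standard basis vectors have representatives whose
squared norms sum to at most `k`. -/
lemma exists_mulVec_eq_single_sum_sq_le {k : ℕ} {ι : Type*} [Fintype ι] [DecidableEq ι]
    (L : Matrix (Fin k) ι ℝ) :
    ∃ w : ι → ι → ℝ, (∀ a, L.mulVec (w a) = L.mulVec (Pi.single a 1)) ∧
      ∑ a, ∑ b, w a b ^ 2 ≤ k := by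
  set T := Matrix.toEuclideanLin L
  set U := (LinearMap.ker T)ᗮ
  set e : OrthonormalBasis ι ℝ (EuclideanSpace ℝ ι) := EuclideanSpace.basisFun ι ℝ
  set u := stdOrthonormalBasis ℝ U
  refine ⟨fun a => WithLp.ofLp (U.starProjection (e a)), fun a => ?_, ?_⟩
  · have hmem : e a - U.starProjection (e a) ∈ LinearMap.ker T := by
      have := U.sub_starProjection_mem_orthogonal (e a)
      rwa [show Uᗮ = LinearMap.ker T from Submodule.orthogonal_orthogonal _] at this
    rw [LinearMap.mem_ker, map_sub, sub_eq_zero] at hmem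
    have := congrArg WithLp.ofLp hmem
    simpa [T, e, Matrix.toLpLin_apply] using this.symm
  · have hnorm (a : ι) : ∑ b, WithLp.ofLp (U.starProjection (e a)) b ^ 2
        = ∑ j, inner ℝ (u j : EuclideanSpace ℝ ι) (e a) ^ 2 := by
      rw [← EuclideanSpace.real_norm_sq_eq, Submodule.starProjection_apply, ← Submodule.coe_norm,
        ← u.sum_sq_norm_inner_right]
      refine Finset.sum_congr rfl fun j _ => ?_
      rw [Real.norm_eq_abs, sq_abs, Submodule.inner_orthogonalProjectionOnto_eq_of_mem_left]
    have hu (j) : ∑ a, inner ℝ (u j : EuclideanSpace ℝ ι) (e a) ^ 2 = 1 := by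
      have := e.sum_sq_norm_inner_left (u j : EuclideanSpace ℝ ι)
      simp only [Real.norm_eq_abs, sq_abs] at this
      rw [this, ← Submodule.coe_norm, u.orthonormal.1 j, one_pow]
    simp_rw [hnorm]
    rw [Finset.sum_comm]
    simp_rw [hu]
    simp only [Finset.sum_const, Finset.card_univ, Fintype.card_fin, nsmul_eq_mul, mul_one,
      Nat.cast_le]
    have h1 := Submodule.finrank_add_finrank_orthogonal (LinearMap.ker T)
    have h2 := LinearMap.finrank_range_add_finrank_ker T
    have h3 := Submodule.finrank_le (LinearMap.range T)
    rw [finrank_euclideanSpace_fin] at h3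
    change Module.finrank ℝ (LinearMap.ker T) + Module.finrank ℝ U = _ at h1
    omega

lemma measurable_sketchApply {k m n : ℕ} (L : Matrix (Fin k) (Fin m × Fin n) ℝ) :
    Measurable (sketchApply L) := by
  refine measurable_pi_lambda _ fun i => ?_
  simp only [sketchApply, Matrix.mulVec, dotProduct]
  refine Finset.measurable_sum _ fun ij _ => Measurable.const_mul ?_ _
  exact (measurable_pi_apply ij.2).comp (measurable_pi_apply ij.1)

instance (n : ℕ) [NeZero n] : IsProbabilityMeasure (uniformFin n) := by
  refine ⟨?_⟩
  simp only [uniformFin, Measure.smul_apply, Measure.finsetSum_apply, measure_univ]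
  simp [ENNReal.inv_mul_cancel, NeZero.ne n]

lemma uniformFin_prod_real_integral (n : ℕ) [NeZero n] (g : Fin n × Fin n → ℝ) :
    ∫ p, g p ∂((uniformFin n).prod (uniformFin n)) = (n ^ 2 : ℝ)⁻¹ * ∑ p, g p := by
  have h (f : Fin n → ℝ) : ∫ i, f i ∂(uniformFin n) = (n : ℝ)⁻¹ * ∑ i, f i := by
    rw [uniformFin, integral_smul_measure, integral_finsetSum_measure fun i _ => .of_finite]
    simp
  rw [integral_prod _ .of_finite, h]
  simp_rw [h]
  rw [← Finset.mul_sum, ← Fintype.sum_prod_type']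
  ring

lemma entrySpiked_real (n : ℕ) [NeZero n] (t : ℝ) {s : Set (Matrix (Fin n) (Fin n) ℝ)}
    (hs : MeasurableSet s) :
    (entrySpiked n t).real s = (n ^ 2 : ℝ)⁻¹ * ∑ p : Fin n × Fin n, ((gaussianMatrix n n).map
      (· + Matrix.of fun a b => if a = p.1 ∧ b = p.2 then t else 0)).real s := by
  have hmeas : Measurable fun x : Matrix (Fin n) (Fin n) ℝ × (Fin n × Fin n) =>
      x.1 + Matrix.of fun a b => if a = x.2.1 ∧ b = x.2.2 then t else 0 :=
    measurable_from_prod_countable_left fun p => measurable_add_const_matrix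
      (Matrix.of fun a b => if a = p.1 ∧ b = p.2 then t else 0)
  rw [entrySpiked, measureReal_def, Measure.map_apply hmeas hs,
    Measure.prod_apply_symm (hmeas hs),
    ← integral_toReal (measurable_of_finite _).aemeasurable (by simp), uniformFin_prod_real_integral]
  congr 1
  refine Finset.sum_congr rfl fun p _ => ?_
  rw [map_measureReal_apply (measurable_add_const_matrix _) hs]
  rfl

lemma sketchApply_add {k m n : ℕ} (L : Matrix (Fin k) (Fin m × Fin n) ℝ)
    (A B : Matrix (Fin m) (Fin n) ℝ) :
    sketchApply L (A + B) = sketchApply L A + sketchApply L B :=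
  Matrix.mulVec_add L _ _

/-- There is an absolute constant C' > 0 such that for all positive n, k, every t > 0 and
every linear sketch L : ℝ^{n×n} → ℝ^k, the total variation distance between the
pushforwards of G₁ and D₂[t] under L is at most C'·t·√k/n. -/
theorem tv_dist_sketch_spiked_entry :
    ∃ C' : ℝ, 0 < C' ∧
      ∀ (n k : ℕ), 0 < n → 0 < k → ∀ t : ℝ, 0 < t →
        ∀ L : Matrix (Fin k) (Fin n × Fin n) ℝ,
          tvDist ((gaussianMatrix n n).map (sketchApply L))
              ((entrySpiked n t).map (sketchApply L))
            ≤ C' * t * Real.sqrt k / n := by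
  refine ⟨√2, by positivity, fun n k hn hk t ht L => ?_⟩
  have : NeZero n := ⟨hn.ne'⟩
  have hn' : (0 : ℝ) < n := by exact_mod_cast hn
  obtain ⟨w, hw, hwk⟩ := exists_mulVec_eq_single_sum_sq_le L
  have hsum : ∑ p, √(∑ q, w p q ^ 2) ≤ n * √k := by
    rw [← Real.sqrt_sq hn'.le, ← Real.sqrt_mul (sq_nonneg _)]
    refine Real.le_sqrt_of_sq_le ((sq_sum_le_card_mul_sum_sq).trans ?_)
    simp_rw [Real.sq_sqrt (Finset.sum_nonneg fun q _ => sq_nonneg (w _ q))]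
    simp only [Finset.card_univ, Fintype.card_prod, Fintype.card_fin]
    push_cast
    rw [← sq]
    gcongr
  have : Nonempty {s : Set (Fin k → ℝ) // MeasurableSet s} := ⟨⟨∅, .empty⟩⟩
  refine ciSup_le fun ⟨s, hs⟩ => ?_
  have hL := measurable_sketchApply L
  have hA := hL hs
  set A := sketchApply L ⁻¹' s with hAdef
  rw [Measure.map_apply hL hs, Measure.map_apply hL hs]
  change |(gaussianMatrix n n).real A - (entrySpiked n t).real A| ≤ _
  have hterm (p : Fin n × Fin n) : |(gaussianMatrix n n).real A - ((gaussianMatrix n n).map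
      (· + Matrix.of fun a b => if a = p.1 ∧ b = p.2 then t else 0)).real A|
      ≤ √2 * t * √(∑ q, w p q ^ 2) := by
    have hV : sketchApply L (Matrix.of fun a b => if a = p.1 ∧ b = p.2 then t else 0)
        = sketchApply L (Matrix.of fun a b => t * w p (a, b)) := by
      have h1 : (fun q : Fin n × Fin n => if q.1 = p.1 ∧ q.2 = p.2 then t else 0)
          = t • Pi.single p 1 := by
        ext q
        simp [Pi.single_apply, Prod.ext_iff]
      change L.mulVec (fun q : Fin n × Fin n => if q.1 = p.1 ∧ q.2 = p.2 then t else 0)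
        = L.mulVec (t • w p)
      rw [h1, Matrix.mulVec_smul, Matrix.mulVec_smul, hw]
    have hpre : (· + Matrix.of fun a b => if a = p.1 ∧ b = p.2 then t else 0) ⁻¹' A
        = (· + Matrix.of fun a b => t * w p (a, b)) ⁻¹' A := by
      ext G
      simp only [hAdef, Set.mem_preimage, sketchApply_add, hV]
    rw [map_measureReal_apply (measurable_add_const_matrix _) hA, hpre,
      ← map_measureReal_apply (measurable_add_const_matrix _) hA]
    refine (abs_gaussianMatrix_sub_map_add_le _ hA).trans_eq ?_
    rw [Real.sqrt_mul zero_le_two, mul_assoc]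
    congr 1
    simp only [Matrix.of_apply, mul_pow]
    rw [← Fintype.sum_prod_type' fun a b => t ^ 2 * w p (a, b) ^ 2, ← Finset.mul_sum,
      Real.sqrt_mul (sq_nonneg _), Real.sqrt_sq ht.le]
  rw [entrySpiked_real n t hA]
  set γ := (gaussianMatrix n n).real A
  have hγ : γ = (n ^ 2 : ℝ)⁻¹ * ∑ _p : Fin n × Fin n, γ := by
    simp
    field_simp
  calc _ = (n ^ 2 : ℝ)⁻¹ * |∑ p : Fin n × Fin n, (γ - ((gaussianMatrix n n).map
      (· + Matrix.of fun a b => if a = p.1 ∧ b = p.2 then t else 0)).real A)| := by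
        rw [Finset.sum_sub_distrib, ← abs_of_nonneg (by positivity : 0 ≤ (n ^ 2 : ℝ)⁻¹), ← abs_mul,
          mul_sub, abs_of_nonneg (by positivity : 0 ≤ (n ^ 2 : ℝ)⁻¹), ← hγ]
    _ ≤ (n ^ 2 : ℝ)⁻¹ * ∑ p, √2 * t * √(∑ q, w p q ^ 2) := by
        gcongr
        exact (Finset.abs_sum_le_sum_abs _ _).trans (Finset.sum_le_sum fun p _ => hterm p)
    _ ≤ (n ^ 2 : ℝ)⁻¹ * (√2 * t * (n * √k)) := by
        rw [← Finset.mul_sum]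
        gcongr
    _ = √2 * t * √k / n := by
        field_simp
end
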